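/- Let H be a Hopf algebra over a field, B ⊆ H a normal Hopf subalgebra such that H is free as a B-module, and suppose every H-module is semisimple over the quotient H//B (i.e., the relevant Lyndon–Hochschild–Serre spectral sequence collapses, giving Ext^i_H(Q,N) ≅ Hom_{H//B}(k, Ext^i_B(Q,N))). Then an H-module Q is projective as an H-module if and only if it is projective as a B-module. -/

import Mathlib

open CategoryTheory

/-- `Hom_{R}(k, X)`, the `R`-linear maps from the trivial module `k` (an `R`-module via
the augmentation `ρ : R →+* k`) to `X` (an `R`-module via `σ`). -/
def homFromTrivial (R k X : Type) [Ring R] [Field k] (ρ : R →+* k)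
    [AddCommGroup X] (σ : Module R X) : Type :=
  letI : Module R k := Module.compHom k ρ
  letI := σ
  k →ₗ[R] X

noncomputable instance (R k X : Type) [Ring R] [Field k] (ρ : R →+* k)
    [AddCommGroup X] (σ : Module R X) : AddCommGroup (homFromTrivial R k X ρ σ) := by
  delta homFromTrivial; infer_instance

/-- Let `H` be a Hopf algebra over a field `k`, `B ⊆ H` a normal Hopf
subalgebra (given by an injective map `ι : B → H` of `k`-algebras whose image is stable
under the coproduct and the antipode, and such that the left ideal generated by the
augmentation ideal `B⁺` is also the right ideal it generates) such that `H` is free as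
a `B`-module, and suppose every `H`-module is semisimple over the quotient `H//B`
(i.e., the relevant Lyndon–Hochschild–Serre spectral sequence collapses, giving
isomorphisms `Ext^i_H(Q,N) ≅ Hom_{H//B}(k, Ext^i_B(Q,N))`).  Here the quotient `H//B`
is presented as a surjection `π : H → Hbar` with kernel `H·B⁺` and induced augmentation
`ρ`, and the `H//B`-module structures on the groups `Ext^i_B(Q,N)` are the data `σ`.
Then an `H`-module `Q` is projective as an `H`-module if and only if it is projective
as a `B`-module. -/
theorem projective_iff_projective_restrict_of_normal_hopf
    (k B H : Type) [Field k] [Ring H] [HopfAlgebra k H] [Ring B] [Algebra k B]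
    (ι : B →ₐ[k] H) (hι : Function.Injective ι)
    -- `B` is a Hopf subalgebra of `H`:
    (hcomul : ∀ b : B, Coalgebra.comul (R := k) (ι b) ∈
      LinearMap.range (TensorProduct.map ι.toLinearMap ι.toLinearMap))
    (hantipode : ∀ b : B, HopfAlgebra.antipode (R := k) (ι b) ∈ Set.range ι)
    -- `B` is normal in `H`: the left ideal generated by the augmentation ideal `B⁺`
    -- coincides with the right ideal it generates:
    (hnormal :
      ((Ideal.span {x : H | x ∈ Set.range ι ∧ Coalgebra.counit (R := k) x = 0} :
        Ideal H) : Set H) =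
      ((Submodule.span Hᵐᵒᵖ {x : H | x ∈ Set.range ι ∧ Coalgebra.counit (R := k) x = 0} :
        Submodule Hᵐᵒᵖ H) : Set H))
    -- `H` is free as a `B`-module:
    (hfree : @Module.Free B H _ _ (Module.compHom H ι.toRingHom))
    -- the quotient `H//B = H/(H·B⁺)`:
    (Hbar : Type) [Ring Hbar] (π : H →+* Hbar) (hπ : Function.Surjective π)
    (hker : RingHom.ker π =
      Ideal.span {x : H | x ∈ Set.range ι ∧ Coalgebra.counit (R := k) x = 0})
    -- every module over `H//B` is semisimple:
    (hss : IsSemisimpleRing Hbar)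
    -- the augmentation of `H//B` induced by the counit:
    (ρ : Hbar →+* k) (hρ : ∀ x : H, ρ (π x) = Coalgebra.counit (R := k) x)
    [HasExt.{0} (ModuleCat H)] [HasExt.{0} (ModuleCat B)]
    (Q : ModuleCat H)
    -- the `H//B`-module structure on each `Ext^i_B(Q, N)`:
    (σ : ∀ (i : ℕ) (N : ModuleCat H), Module Hbar
      (Abelian.Ext ((ModuleCat.restrictScalars ι.toRingHom).obj Q)
        ((ModuleCat.restrictScalars ι.toRingHom).obj N) i))
    -- the collapsing of the LHS spectral sequence:
    (hiso : ∀ (i : ℕ) (N : ModuleCat H), Nonempty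
      (Abelian.Ext Q N i ≃+ homFromTrivial Hbar k
        (Abelian.Ext ((ModuleCat.restrictScalars ι.toRingHom).obj Q)
          ((ModuleCat.restrictScalars ι.toRingHom).obj N) i) ρ (σ i N))) :
    Projective Q ↔ Projective ((ModuleCat.restrictScalars ι.toRingHom).obj Q) := by
  constructor
  · intro hQ
    letI : Module B H := Module.compHom H ι.toRingHom
    letI : Module B Q := Module.compHom Q ι.toRingHom
    letI : Module B (Q →₀ H) := Module.compHom (Q →₀ H) ι.toRingHom
    have hQ' : Module.Projective H Q := inferInstance
    obtain ⟨s, hs⟩ := hQ'.out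
    have hF : Module.Projective B (Q →₀ H) := by
      have h1 : Module.Projective B H := inferInstance
      have h2 : Module.Projective B (Π₀ _ : Q, H) := inferInstance
      classical
      let e : (Π₀ _ : Q, H) ≃ₗ[B] (Q →₀ H) :=
        { (finsuppAddEquivDFinsupp (ι := Q) (M := H)).symm with
          map_smul' := by
            intro b x
            ext q
            rfl }
      exact Module.Projective.of_equiv' e
    let s' : Q →ₗ[B] (Q →₀ H) :=
      { s with map_smul' := fun b x => s.map_smul (ι b) x }
    let t' : (Q →₀ H) →ₗ[B] Q :=
      { (Finsupp.linearCombination H (id : Q → Q)) with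
        map_smul' := fun b x => (Finsupp.linearCombination H (id : Q → Q)).map_smul (ι b) x }
    have : Module.Projective B Q :=
      Module.Projective.of_split s' t' (LinearMap.ext hs)
    have h3 : Module.Projective B ((ModuleCat.restrictScalars ι.toRingHom).obj Q) := this
    exact ModuleCat.projective_of_categoryTheory_projective _
  · intro hQ
    rw [projective_iff_subsingleton_ext_one]
    intro N
    obtain ⟨e⟩ := hiso 1 N
    haveI hsub : Subsingleton
        (Abelian.Ext ((ModuleCat.restrictScalars ι.toRingHom).obj Q)
          ((ModuleCat.restrictScalars ι.toRingHom).obj N) 1) :=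
      Abelian.Ext.subsingleton_of_projective _ _ 0
    have hhom : Subsingleton (homFromTrivial Hbar k
        (Abelian.Ext ((ModuleCat.restrictScalars ι.toRingHom).obj Q)
          ((ModuleCat.restrictScalars ι.toRingHom).obj N) 1) ρ (σ 1 N)) := by
      letI : Module Hbar k := Module.compHom k ρ
      letI := σ 1 N
      exact ⟨fun f g => LinearMap.ext fun x => hsub.elim _ _⟩
    exact e.toEquiv.subsingleton
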